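/- Let N ≥ 1 and Λ > 1, and let (u, v) be a classical solution of the system (P_Λ) with u > 0 and v > 0 at every point of ℝ^N. Then: (i) if Λ > 3, then u(x) + v(x) < 1 for every x ∈ ℝ^N; (ii) if Λ < 3, then u(x) + v(x) > 1 for every x ∈ ℝ^N. -/

import Mathlib

/-!
Write `w = u + v`. Adding the two equations gives `Δw = w³ - w + (Λ - 3) u v w`, so `w` is a
positive subsolution (`Λ > 3`) or supersolution (`Λ < 3`) of the Allen–Cahn equation `Δw = w³ - w`.
No boundedness of `w` is assumed; the non-strict bounds `w ≤ 1` and `w ≥ 1` come from polynomial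
barriers on large balls. Fix a centre `a` and put `φ(x) = R² - |x - a|²`.

* Subsolutions (`subsolution_le_one`): at an interior maximum `y` of `w φ` over the ball, the first
  and second order conditions give `(w(y) φ(y))² ≤ φ² + 8 |y - a|² + 2 n φ`, whence
  `w(a)² R⁴ ≤ R⁴ + (8 + 2 n) R²`, and `R → ∞` yields `w(a) ≤ 1` (a Keller–Osserman argument).
* Supersolutions (`one_le_supersolution`): at an interior maximum `y` of `φ² / w` over the ball,
  `φ² - M w` with `M = φ(y)² / w(y)` has a local maximum at `y`, which gives
  `1 - w(y)² ≤ (8 + 4 n)² / (32 R²)`. Since `φ` is largest at `a`, also `w(a) ≥ w(y)`,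
  and `R → ∞` yields `w(a) ≥ 1`.

If equality `w(x) = 1` held somewhere, `x` would be a global extremum of `w`, and the sign of `Δw(x)`
would contradict `Δw(x) = (Λ - 3) u(x) v(x)`.
-/


open scoped RealInnerProductSpace
open Filter

noncomputable section

/-- The Laplacian of `f : ℝ^N → ℝ`, as the sum of the pure second partial
derivatives in the coordinate directions. -/
def lap (N : ℕ) (f : EuclideanSpace ℝ (Fin N) → ℝ) (x : EuclideanSpace ℝ (Fin N)) : ℝ :=
  ∑ i : Fin N,
    fderiv ℝ (fun y => fderiv ℝ f y (EuclideanSpace.single i 1)) x (EuclideanSpace.single i 1)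

/-- `(u, v)` is a classical solution of the system `(P_Λ)` on `ℝ^N`:
`u, v` are `C²` and `-Δu = u - u³ - Λ u v²`, `-Δv = v - v³ - Λ u² v` pointwise. -/
def IsSolution (N : ℕ) (Λ : ℝ) (u v : EuclideanSpace ℝ (Fin N) → ℝ) : Prop :=
  ContDiff ℝ 2 u ∧ ContDiff ℝ 2 v ∧
  (∀ x, -lap N u x = u x - (u x) ^ 3 - Λ * u x * (v x) ^ 2) ∧
  (∀ x, -lap N v x = v x - (v x) ^ 3 - Λ * (u x) ^ 2 * v x)

/-- Condition `(h∞)`: `u → 1`, `v → 0` as `x_N → +∞` and `u → 0`, `v → 1` as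
`x_N → -∞`, uniformly with respect to `x' ∈ ℝ^{N-1}` (the dimension is `N + 1`). -/
def Hinf (N : ℕ) (u v : EuclideanSpace ℝ (Fin (N + 1)) → ℝ) : Prop :=
  (∀ ε : ℝ, 0 < ε → ∃ M : ℝ, ∀ x : EuclideanSpace ℝ (Fin (N + 1)),
    M ≤ x (Fin.last N) → |u x - 1| < ε ∧ |v x| < ε) ∧
  (∀ ε : ℝ, 0 < ε → ∃ M : ℝ, ∀ x : EuclideanSpace ℝ (Fin (N + 1)),
    x (Fin.last N) ≤ M → |u x| < ε ∧ |v x - 1| < ε)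

/-! ### Second order conditions at extrema -/

/-- Second order necessary condition at a local maximum of a function of one variable. -/
lemma second_deriv_nonpos {f f' : ℝ → ℝ} {c : ℝ} (hf : ∀ s, HasDerivAt f (f' s) s)
    (hc : HasDerivAt f' c 0) (hmax : IsLocalMax f 0) : c ≤ 0 := by
  by_contra! hpos
  have hd : deriv f = f' := funext fun s => (hf s).deriv
  have h0 : f' 0 = 0 := hmax.hasDerivAt_eq_zero (hf 0)
  have hmin : IsLocalMin f 0 := by
    apply isLocalMin_of_deriv_deriv_pos
    · rw [hd, hc.deriv]; exact hpos
    · rw [hd, h0]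
    · exact (hf 0).continuousAt
  -- A point that is both a local maximum and a local minimum has a constant neighbourhood.
  have hconst : f =ᶠ[nhds 0] fun _ => f 0 := by
    filter_upwards [hmax, hmin] with s h1 h2 using le_antisymm h1 h2
  have hd0 : f' =ᶠ[nhds 0] fun _ => 0 := by
    have h := hconst.deriv
    rw [hd] at h
    simpa using h
  have := hd0.deriv_eq
  rw [hc.deriv] at this
  simp at this
  linarith

/-- The pure second derivative of `f` at `x` in the `i`-th coordinate direction. -/
def dd (n : ℕ) (f : EuclideanSpace ℝ (Fin n) → ℝ) (i : Fin n) (x : EuclideanSpace ℝ (Fin n)) : ℝ :=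
  fderiv ℝ (fun y => fderiv ℝ f y (EuclideanSpace.single i 1)) x (EuclideanSpace.single i 1)

lemma lap_eq_sum_dd (n : ℕ) (f : EuclideanSpace ℝ (Fin n) → ℝ) (x : EuclideanSpace ℝ (Fin n)) :
    lap n f x = ∑ i, dd n f i x := rfl

section Lines

variable {n : ℕ} {w : EuclideanSpace ℝ (Fin n) → ℝ}

lemma hasDerivAt_add_smul (y e : EuclideanSpace ℝ (Fin n)) (s : ℝ) :
    HasDerivAt (fun s : ℝ => y + s • e) e s := by
  simpa using ((hasDerivAt_id s).smul_const e).const_add y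

lemma line_deriv (hw : ContDiff ℝ 2 w) (y e : EuclideanSpace ℝ (Fin n)) (s : ℝ) :
    HasDerivAt (fun s : ℝ => w (y + s • e)) (fderiv ℝ w (y + s • e) e) s :=
  ((hw.differentiable (by norm_num)) (y + s • e)).hasFDerivAt.comp_hasDerivAt s
    (hasDerivAt_add_smul y e s)

lemma differentiable_fderiv_apply (hw : ContDiff ℝ 2 w) (e : EuclideanSpace ℝ (Fin n)) :
    Differentiable ℝ (fun z => fderiv ℝ w z e) := by
  have h : ContDiff ℝ 1 (fderiv ℝ w) := hw.fderiv_right (by norm_num)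
  exact (h.clm_apply contDiff_const).differentiable (by norm_num)

lemma line_deriv_two (hw : ContDiff ℝ 2 w) (y : EuclideanSpace ℝ (Fin n)) (i : Fin n) :
    HasDerivAt (fun s : ℝ => fderiv ℝ w (y + s • EuclideanSpace.single i (1 : ℝ))
      (EuclideanSpace.single i 1)) (dd n w i y) 0 := by
  have h := (differentiable_fderiv_apply hw (EuclideanSpace.single i (1 : ℝ))
    (y + (0 : ℝ) • EuclideanSpace.single i (1 : ℝ))).hasFDerivAt.comp_hasDerivAt (0 : ℝ)
    (hasDerivAt_add_smul y (EuclideanSpace.single i 1) 0)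
  simpa [dd, Function.comp_def] using h

lemma dd_add {u v : EuclideanSpace ℝ (Fin n) → ℝ} (hu : ContDiff ℝ 2 u) (hv : ContDiff ℝ 2 v)
    (i : Fin n) (x : EuclideanSpace ℝ (Fin n)) :
    dd n (fun z => u z + v z) i x = dd n u i x + dd n v i x := by
  unfold dd
  have h : (fun y => fderiv ℝ (fun z => u z + v z) y (EuclideanSpace.single i (1 : ℝ))) =
      fun y => fderiv ℝ u y (EuclideanSpace.single i 1) +
        fderiv ℝ v y (EuclideanSpace.single i 1) := by
    funext y
    rw [fderiv_fun_add (hu.differentiable (by norm_num) y) (hv.differentiable (by norm_num) y)]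
    rfl
  rw [h, fderiv_fun_add (differentiable_fderiv_apply hu _ x) (differentiable_fderiv_apply hv _ x)]
  rfl

lemma lap_add {u v : EuclideanSpace ℝ (Fin n) → ℝ} (hu : ContDiff ℝ 2 u) (hv : ContDiff ℝ 2 v)
    (x : EuclideanSpace ℝ (Fin n)) :
    lap n (fun z => u z + v z) x = lap n u x + lap n v x := by
  simp only [lap_eq_sum_dd, dd_add hu hv, Finset.sum_add_distrib]

lemma isLocalMax_line {F : EuclideanSpace ℝ (Fin n) → ℝ} {y : EuclideanSpace ℝ (Fin n)}
    (h : IsLocalMax F y) (e : EuclideanSpace ℝ (Fin n)) :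
    IsLocalMax (fun s : ℝ => F (y + s • e)) 0 := by
  have hc : Tendsto (fun s : ℝ => y + s • e) (nhds 0) (nhds y) := by
    have : Continuous fun s : ℝ => y + s • e := by fun_prop
    simpa using this.tendsto 0
  have := hc.eventually h
  simpa [IsLocalMax, IsMaxFilter] using this

lemma lap_nonpos_of_isLocalMax (hw : ContDiff ℝ 2 w) {y : EuclideanSpace ℝ (Fin n)}
    (h : IsLocalMax w y) : lap n w y ≤ 0 := by
  rw [lap_eq_sum_dd]
  exact Finset.sum_nonpos fun i _ =>
    second_deriv_nonpos (line_deriv hw y _) (line_deriv_two hw y i) (isLocalMax_line h _)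

lemma lap_nonneg_of_isLocalMin (hw : ContDiff ℝ 2 w) {y : EuclideanSpace ℝ (Fin n)}
    (h : IsLocalMin w y) : 0 ≤ lap n w y := by
  rw [lap_eq_sum_dd]
  refine Finset.sum_nonneg fun i _ => ?_
  have h2 := second_deriv_nonpos (fun s => (line_deriv hw y (EuclideanSpace.single i 1) s).fun_neg)
    (line_deriv_two hw y i).fun_neg (isLocalMax_line h.neg _)
  linarith

/-! ### Quadratic barriers on balls -/

/-- The barrier `R² - |x - a|²`, positive exactly on the open ball of radius `R` about `a`. -/
def bar (a : EuclideanSpace ℝ (Fin n)) (R : ℝ) (x : EuclideanSpace ℝ (Fin n)) : ℝ :=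
  R ^ 2 - ‖x - a‖ ^ 2

lemma continuous_bar (a : EuclideanSpace ℝ (Fin n)) (R : ℝ) : Continuous (bar a R) := by
  unfold bar; fun_prop

lemma bar_line (a y : EuclideanSpace ℝ (Fin n)) (R s : ℝ) (i : Fin n) :
    bar a R (y + s • EuclideanSpace.single i (1 : ℝ)) =
      bar a R y - 2 * (y - a) i * s - s ^ 2 := by
  unfold bar
  rw [show y + s • EuclideanSpace.single i (1 : ℝ) - a =
    (y - a) + s • EuclideanSpace.single i (1 : ℝ) by abel, norm_add_sq_real, inner_smul_right,
    EuclideanSpace.inner_single_right, norm_smul]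
  simp
  ring

lemma bar_line_deriv (a y : EuclideanSpace ℝ (Fin n)) (R : ℝ) (i : Fin n) (s : ℝ) :
    HasDerivAt (fun s : ℝ => bar a R (y + s • EuclideanSpace.single i (1 : ℝ)))
      (-2 * (y - a) i - 2 * s) s := by
  simp only [bar_line]
  have h := (((hasDerivAt_id s).const_mul (2 * (y - a) i)).const_sub (bar a R y)).fun_sub
    ((hasDerivAt_id s).fun_pow 2)
  exact h.congr_deriv (by simp)

lemma bar_line_deriv_two (q : ℝ) :
    HasDerivAt (fun s : ℝ => -2 * q - 2 * s) (-2) 0 := by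
  have h := ((hasDerivAt_id (0 : ℝ)).const_mul 2).const_sub (-2 * q)
  exact h.congr_deriv (by simp)

lemma sum_coord_sq (p : EuclideanSpace ℝ (Fin n)) : ∑ i, (p i) ^ 2 = ‖p‖ ^ 2 := by
  rw [EuclideanSpace.norm_sq_eq]
  simp

/-- A continuous function that is positive at the centre of a ball and nowhere positive on its
boundary sphere attains its maximum over the closed ball at an interior point. -/
lemma exists_interior_max (a : EuclideanSpace ℝ (Fin n)) {R : ℝ} (hR : 0 < R)
    {F : EuclideanSpace ℝ (Fin n) → ℝ} (hF : Continuous F) (hFa : 0 < F a)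
    (hpos : ∀ x, 0 ≤ bar a R x → 0 < F x → 0 < bar a R x) :
    ∃ y, 0 < bar a R y ∧ F a ≤ F y ∧ ∀ᶠ x in nhds y, F x ≤ F y := by
  obtain ⟨y, hy, hmax⟩ := (isCompact_closedBall a R).exists_isMaxOn
    ⟨a, Metric.mem_closedBall_self hR.le⟩ hF.continuousOn
  have hball : ∀ x, 0 ≤ bar a R x → x ∈ Metric.closedBall a R := by
    intro x hx
    rw [mem_closedBall_iff_norm]
    unfold bar at hx
    exact abs_le_of_sq_le_sq' (by linarith) hR.le |>.2
  have hay : F a ≤ F y := hmax (Metric.mem_closedBall_self hR.le)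
  have hy0 : 0 ≤ bar a R y := by
    rw [mem_closedBall_iff_norm] at hy
    have := pow_le_pow_left₀ (norm_nonneg _) hy 2
    unfold bar; linarith
  have hyb : 0 < bar a R y := hpos y hy0 (hFa.trans_le hay)
  refine ⟨y, hyb, hay, ?_⟩
  filter_upwards [(continuous_bar a R).continuousAt.eventually (lt_mem_nhds hyb)] with x hx
  exact hmax (hball x hx.le)

lemma bar_self (a : EuclideanSpace ℝ (Fin n)) (R : ℝ) : bar a R a = R ^ 2 := by simp [bar]

/-! ### Differential inequalities at contact points -/

/-- Differential inequality at a maximum of `w φ`: eliminating the gradient of `w` through the first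
order condition `φ ∇w = -w ∇φ` leaves a bound on `φ² Δw`. -/
lemma lap_le_at_max_mul (hw : ContDiff ℝ 2 w) (a y : EuclideanSpace ℝ (Fin n)) (R : ℝ)
    (hy : 0 < bar a R y) (h : IsLocalMax (fun x => w x * bar a R x) y) :
    lap n w y * bar a R y ^ 2 ≤ 8 * w y * ‖y - a‖ ^ 2 + 2 * n * w y * bar a R y := by
  have key : ∀ i : Fin n, dd n w i y * bar a R y ^ 2 ≤
      8 * w y * ((y - a) i) ^ 2 + 2 * w y * bar a R y := by
    intro i
    have h1 := fun s => (line_deriv hw y (EuclideanSpace.single i 1) s).fun_mul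
      (bar_line_deriv a y R i s)
    have hl := isLocalMax_line h (EuclideanSpace.single i 1)
    have e0 := hl.hasDerivAt_eq_zero (h1 0)
    have h2 := second_deriv_nonpos h1
      (((line_deriv_two hw y i).fun_mul (bar_line_deriv a y R i 0)).fun_add
        ((line_deriv hw y (EuclideanSpace.single i 1) 0).fun_mul
          (bar_line_deriv_two ((y - a) i)))) hl
    simp only [zero_smul, add_zero, mul_zero, sub_zero] at e0 h2
    generalize fderiv ℝ w y (EuclideanSpace.single i 1) = g at e0 h2
    generalize (y - a) i = q at e0 h2 ⊢
    generalize bar a R y = b at *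
    generalize dd n w i y = D at *
    generalize w y = W at *
    have h3 := mul_le_mul_of_nonneg_right h2 hy.le
    have e1 : g * b = 2 * W * q := by linarith
    have e2 : g * q * b = 2 * W * q ^ 2 := by rw [mul_right_comm, e1]; ring
    nlinarith
  calc lap n w y * bar a R y ^ 2 = ∑ i, dd n w i y * bar a R y ^ 2 := by
        rw [lap_eq_sum_dd, Finset.sum_mul]
    _ ≤ ∑ i, (8 * w y * ((y - a) i) ^ 2 + 2 * w y * bar a R y) :=
        Finset.sum_le_sum fun i _ => key i
    _ = _ := by
        rw [Finset.sum_add_distrib, ← Finset.mul_sum, sum_coord_sq]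
        simp
        ring

/-- Differential inequality at a point where a multiple of `w` touches `φ²` from above. -/
lemma lap_ge_at_touching (hw : ContDiff ℝ 2 w) (a y : EuclideanSpace ℝ (Fin n)) (R M : ℝ)
    (h : IsLocalMax (fun x => bar a R x * bar a R x - M * w x) y) :
    8 * ‖y - a‖ ^ 2 - 4 * n * bar a R y ≤ M * lap n w y := by
  have key : ∀ i : Fin n, 8 * ((y - a) i) ^ 2 - 4 * bar a R y ≤ M * dd n w i y := by
    intro i
    have hb := bar_line_deriv a y R i
    have hb2 := bar_line_deriv_two ((y - a) i)
    have h2 := second_deriv_nonpos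
      (fun s => ((hb s).fun_mul (hb s)).fun_sub
        ((line_deriv hw y (EuclideanSpace.single i 1) s).const_mul M))
      (((hb2.fun_mul (hb 0)).fun_add ((hb 0).fun_mul hb2)).fun_sub
        ((line_deriv_two hw y i).const_mul M))
      (isLocalMax_line h (EuclideanSpace.single i 1))
    simp only [zero_smul, add_zero, mul_zero, sub_zero] at h2
    nlinarith
  calc 8 * ‖y - a‖ ^ 2 - 4 * n * bar a R y = ∑ i, (8 * ((y - a) i) ^ 2 - 4 * bar a R y) := by
        rw [Finset.sum_sub_distrib, ← Finset.mul_sum, sum_coord_sq]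
        simp
        ring
    _ ≤ ∑ i, M * dd n w i y := Finset.sum_le_sum fun i _ => key i
    _ = _ := by rw [lap_eq_sum_dd, Finset.mul_sum]

/-! ### Entire positive sub- and supersolutions of the Allen–Cahn equation -/

lemma subsolution_le_one (hw : ContDiff ℝ 2 w) (hpos : ∀ x, 0 < w x)
    (hsub : ∀ x, w x ^ 3 - w x ≤ lap n w x) (a : EuclideanSpace ℝ (Fin n)) : w a ≤ 1 := by
  have bound : ∀ R : ℝ, 0 < R → (w a ^ 2 - 1) * R ^ 2 ≤ 8 + 2 * n := by
    intro R hR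
    obtain ⟨y, hy, hay, hmax⟩ := exists_interior_max a hR
      (F := fun x => w x * bar a R x) (hw.continuous.mul (continuous_bar a R))
      (by simp only [bar_self]; have := hpos a; positivity)
      (fun x _ hx => pos_of_mul_pos_right hx (hpos x).le)
    have h1 := lap_le_at_max_mul hw a y R hy hmax
    have h2 := mul_le_mul_of_nonneg_right (hsub y) (sq_nonneg (bar a R y))
    have hbR : bar a R y = R ^ 2 - ‖y - a‖ ^ 2 := rfl
    simp only [bar_self] at hay
    have hn : (0 : ℝ) ≤ n := n.cast_nonneg
    have hwy := hpos y
    have hr := sq_nonneg ‖y - a‖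
    have hwa := hpos a
    generalize bar a R y = b at *
    generalize ‖y - a‖ ^ 2 = r at *
    have hb2 : b ^ 2 ≤ (R ^ 2) ^ 2 := pow_le_pow_left₀ hy.le (by linarith) 2
    have h3 : (w y * b) ^ 2 ≤ b ^ 2 + 8 * r + 2 * n * b := by
      refine le_of_mul_le_mul_left ?_ hwy
      nlinarith
    have h4 : (w a * R ^ 2) ^ 2 ≤ (w y * b) ^ 2 := pow_le_pow_left₀ (by positivity) hay 2
    have h5 : (n : ℝ) * b ≤ n * R ^ 2 := mul_le_mul_of_nonneg_left (by linarith) hn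
    refine le_of_mul_le_mul_right ?_ (pow_pos hR 2)
    nlinarith
  by_contra! hgt
  have hd : 0 < w a ^ 2 - 1 := by nlinarith
  have hn : (0 : ℝ) ≤ n := n.cast_nonneg
  have h := bound (Real.sqrt ((9 + 2 * n) / (w a ^ 2 - 1))) (Real.sqrt_pos.2 (by positivity))
  rw [Real.sq_sqrt (by positivity), mul_div_cancel₀ _ hd.ne'] at h
  linarith

lemma one_le_supersolution (hw : ContDiff ℝ 2 w) (hpos : ∀ x, 0 < w x)
    (hsup : ∀ x, lap n w x ≤ w x ^ 3 - w x) (a : EuclideanSpace ℝ (Fin n)) : 1 ≤ w a := by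
  have bound : ∀ R : ℝ, 0 < R → (1 - w a ^ 2) * (32 * R ^ 2) ≤ (8 + 4 * n) ^ 2 := by
    intro R hR
    obtain ⟨y, hy, hay, hmax⟩ := exists_interior_max a hR
      (F := fun x => bar a R x * bar a R x / w x)
      (((continuous_bar a R).mul (continuous_bar a R)).div hw.continuous fun x => (hpos x).ne')
      (by simp only [bar_self]; have := hpos a; positivity)
      (fun x hx0 hx => lt_of_le_of_ne hx0 fun h0 => by simp [← h0] at hx)
    have hwy := hpos y
    have hwa := hpos a
    have hloc : IsLocalMax (fun x => bar a R x * bar a R x -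
        (bar a R y * bar a R y / w y) * w x) y := by
      filter_upwards [hmax] with x hx
      rw [div_le_iff₀ (hpos x)] at hx
      rw [div_mul_cancel₀ _ hwy.ne']
      linarith
    have h1 := lap_ge_at_touching hw a y R _ hloc
    have hbR : bar a R y = R ^ 2 - ‖y - a‖ ^ 2 := rfl
    have h2 := mul_le_mul_of_nonneg_left (hsup y)
      (by positivity : 0 ≤ bar a R y * bar a R y / w y)
    simp only [bar_self] at hay
    have hn : (0 : ℝ) ≤ n := n.cast_nonneg
    have hr := sq_nonneg ‖y - a‖
    generalize bar a R y = b at *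
    generalize ‖y - a‖ ^ 2 = r at *
    have hb2 : b * b ≤ R ^ 2 * R ^ 2 := mul_le_mul (by linarith) (by linarith) hy.le (by positivity)
    have hle : w y ≤ w a := by
      rw [div_le_div_iff₀ hwa hwy] at hay
      have h3 := mul_le_mul_of_nonneg_right hb2 hwa.le
      exact le_of_mul_le_mul_left (hay.trans h3) (by positivity)
    have h4 : b * b / w y * (w y ^ 3 - w y) = b ^ 2 * (w y ^ 2 - 1) := by
      field_simp
    rw [h4] at h2
    have h5 : b ^ 2 * (1 - w y ^ 2) ≤ (8 + 4 * n) * b - 8 * R ^ 2 := by nlinarith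
    have h6 : (1 - w y ^ 2) * (32 * R ^ 2) ≤ (8 + 4 * n) ^ 2 := by
      refine le_of_mul_le_mul_left ?_ (pow_pos hy 2)
      have h7 := mul_le_mul_of_nonneg_right h5 (by positivity : 0 ≤ 32 * R ^ 2)
      -- Completing the square: `c b - 8 R² ≤ (c b)² / (32 R²)` with `c = 8 + 4 n`.
      have h8 := sq_nonneg ((8 + 4 * n) * b - 16 * R ^ 2)
      linarith
    have h9 : w y ^ 2 ≤ w a ^ 2 := pow_le_pow_left₀ hwy.le hle 2
    have h10 := mul_le_mul_of_nonneg_right h9 (by positivity : 0 ≤ 32 * R ^ 2)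
    linarith
  by_contra! hlt
  have hd : 0 < 1 - w a ^ 2 := by nlinarith [hpos a]
  have h := bound (Real.sqrt ((8 + 4 * n) ^ 2 / (1 - w a ^ 2))) (Real.sqrt_pos.2 (by positivity))
  rw [Real.sq_sqrt (by positivity), mul_left_comm, mul_div_cancel₀ _ hd.ne'] at h
  have : (0 : ℝ) < (8 + 4 * n) ^ 2 := by positivity
  linarith

end Lines

/-- Theorem 1.11: comparison with the case `Λ = 3`:
`u + v < 1` if `Λ > 3`, and `u + v > 1` if `Λ < 3`. -/
theorem stmt_12 (N : ℕ) (Λ : ℝ) (hΛ : 1 < Λ)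
    (u v : EuclideanSpace ℝ (Fin (N + 1)) → ℝ)
    (hsol : IsSolution (N + 1) Λ u v)
    (hu : ∀ x, 0 < u x) (hv : ∀ x, 0 < v x) :
    (3 < Λ → ∀ x, u x + v x < 1) ∧ (Λ < 3 → ∀ x, 1 < u x + v x) := by
  obtain ⟨hu2, hv2, equ, eqv⟩ := hsol
  have hw : ContDiff ℝ 2 (fun z => u z + v z) := hu2.add hv2
  have hpos : ∀ x, 0 < u x + v x := fun x => add_pos (hu x) (hv x)
  have hlap : ∀ x, lap (N + 1) (fun z => u z + v z) x =
      (u x + v x) ^ 3 - (u x + v x) + (Λ - 3) * (u x * v x * (u x + v x)) := by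
    intro x
    rw [lap_add hu2 hv2]
    linarith [equ x, eqv x]
  have hprod : ∀ x, 0 < u x * v x * (u x + v x) := fun x =>
    mul_pos (mul_pos (hu x) (hv x)) (hpos x)
  constructor
  · intro h3
    have hterm : ∀ x, 0 < (Λ - 3) * (u x * v x * (u x + v x)) := fun x =>
      mul_pos (by linarith) (hprod x)
    have hle := subsolution_le_one hw hpos (fun x => by rw [hlap]; linarith [hterm x])
    intro x
    refine lt_of_le_of_ne (hle x) fun h1 => ?_
    have hmax : IsLocalMax (fun z => u z + v z) x :=
      Eventually.of_forall fun z => (hle z).trans h1.ge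
    have h := lap_nonpos_of_isLocalMax hw hmax
    have ht := hterm x
    rw [hlap, h1] at h
    rw [h1] at ht
    linarith
  · intro h3
    have hterm : ∀ x, (Λ - 3) * (u x * v x * (u x + v x)) < 0 := fun x =>
      mul_neg_of_neg_of_pos (by linarith) (hprod x)
    have hge := one_le_supersolution hw hpos (fun x => by rw [hlap]; linarith [hterm x])
    intro x
    refine lt_of_le_of_ne (hge x) fun h1 => ?_
    have hmin : IsLocalMin (fun z => u z + v z) x :=
      Eventually.of_forall fun z => h1.symm.le.trans (hge z)
    have h := lap_nonneg_of_isLocalMin hw hmin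
    have ht := hterm x
    rw [hlap, ← h1] at h
    rw [← h1] at ht
    linarith
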